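/- Let α ∈ (0, 1/2). Then lim_{x → +∞} E_{2α,α}(−x) / E_{2α,1}(−x) = Γ(1 − 2α) / Γ(−α); in particular this limit is a negative real number. -/

import Mathlib

/-- The two-parameter Mittag–Leffler function restricted to real arguments:
`E_{α,β}(x) = ∑ xⁿ / Γ(αn + β)`. -/
noncomputable def mittagLefflerReal (α β x : ℝ) : ℝ :=
  ∑' n : ℕ, x ^ n / Real.Gamma (α * n + β)

/-!
The relation `E_{a,β-a}(-x) = 1 / Γ(β - a) - x E_{a,β}(-x)` reduces the asymptotics
`x E_{a,β}(-x) → 1 / Γ(β - a)`, for `0 < a < 1`, to `E_{a,γ}(-x) → 0`. Summing Hankel's formula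
`2πi / Γ(z) = ∫ eˢ s⁻ᶻ ds` over the series gives `2πi E_{a,γ}(-x) = ∫ eˢ s^{a-γ} / (sᵃ + x) ds`;
as `|arg sᵃ| ≤ aπ < π`, the denominator satisfies `|sᵃ + x| ≥ (|sᵃ| + x) cos (aπ/2)`, and dominated
convergence applies. By conjugation symmetry only the upper half of the contour matters, after
taking imaginary parts; in the coordinate `s = eʷ` it bounds a half-strip and no branch cut appears.

Hankel's formula holds for `z < 1` by shrinking the contour onto the cut, where it becomes Euler's
integral and the reflection formula; it extends to all `z` by the recursion of `1 / Γ`.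
-/

open Complex MeasureTheory Filter Set Topology
open scoped Real

section HalfHankelContour

/-- The closed half-strip `c ≤ Re w`, `0 ≤ Im w ≤ π`, whose left and top sides make up the half
Hankel contour. -/
def halfStrip (c : ℝ) : Set ℂ := Ici c ×ℂ Icc 0 π

/-- Integrability along the half Hankel contour, which goes up from `c` to `c + πi` and then right
to `∞ + πi`. It is the upper half of Hankel's contour for `1 / Γ`, in the coordinate `w = log s`. -/
structure HalfHankelIntegrable {E : Type*} [NormedAddCommGroup E] (c : ℝ) (f : ℂ → E) :
    Prop where
  left : IntervalIntegrable (fun θ : ℝ => f (c + θ * I)) volume 0 π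
  top : IntegrableOn (fun t : ℝ => f (t + π * I)) (Ioi c)

/-- The contour integral `∫ f(w) dw` along the half Hankel contour from `c` to `∞ + πi`. -/
noncomputable def halfHankelIntegral (c : ℝ) (f : ℂ → ℂ) : ℂ :=
  I * (∫ θ in (0 : ℝ)..π, f (c + θ * I)) + ∫ t in Ioi c, f (t + π * I)

variable {c d : ℝ}

theorem left_mem_halfStrip {θ : ℝ} (hθ : θ ∈ Icc 0 π) : (c + θ * I : ℂ) ∈ halfStrip c := by
  simpa [halfStrip, mem_reProdIm] using hθ

theorem top_mem_halfStrip {t : ℝ} (ht : c ≤ t) : (t + π * I : ℂ) ∈ halfStrip c := by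
  simpa [halfStrip, mem_reProdIm, Real.pi_pos.le] using ht

namespace HalfHankelIntegrable

variable {E : Type*} [NormedAddCommGroup E]

theorem norm {f : ℂ → E} (hf : HalfHankelIntegrable c f) :
    HalfHankelIntegrable c fun w => ‖f w‖ :=
  ⟨hf.left.norm, hf.top.norm⟩

theorem const_mul {𝕜 : Type*} [NormedRing 𝕜] {f : ℂ → 𝕜} (hf : HalfHankelIntegrable c f) (k : 𝕜) :
    HalfHankelIntegrable c fun w => k * f w :=
  ⟨hf.left.const_mul k, hf.top.const_mul k⟩

theorem sub {f g : ℂ → E} (hf : HalfHankelIntegrable c f) (hg : HalfHankelIntegrable c g) :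
    HalfHankelIntegrable c fun w => f w - g w :=
  ⟨hf.left.sub hg.left, hf.top.sub hg.top⟩

theorem of_norm_le {f : ℂ → E} {bound : ℂ → ℝ} (hbound : HalfHankelIntegrable c bound)
    (hf : ContinuousOn f (halfStrip c)) (hle : ∀ w ∈ halfStrip c, ‖f w‖ ≤ bound w) :
    HalfHankelIntegrable c f where
  left := by
    refine (hf.comp (by fun_prop) fun θ hθ => ?_).intervalIntegrable
    exact left_mem_halfStrip (uIcc_of_le Real.pi_pos.le ▸ hθ)
  top := by
    have hcont : ContinuousOn (fun t : ℝ => f (t + π * I)) (Ioi c) :=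
      hf.comp (by fun_prop) fun t ht => top_mem_halfStrip (le_of_lt ht)
    refine hbound.top.mono' (hcont.aestronglyMeasurable measurableSet_Ioi) ?_
    filter_upwards [ae_restrict_mem measurableSet_Ioi] with t ht
    exact hle _ (top_mem_halfStrip (le_of_lt ht))

end HalfHankelIntegrable

theorem halfHankelIntegral_sub {f g : ℂ → ℂ} (hf : HalfHankelIntegrable c f)
    (hg : HalfHankelIntegrable c g) :
    halfHankelIntegral c (fun w => f w - g w) =
      halfHankelIntegral c f - halfHankelIntegral c g := by
  simp only [halfHankelIntegral]
  rw [intervalIntegral.integral_sub hf.left hg.left, integral_sub hf.top hg.top]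
  ring

theorem halfHankelIntegral_const_mul (k : ℂ) (f : ℂ → ℂ) :
    halfHankelIntegral c (fun w => k * f w) = k * halfHankelIntegral c f := by
  simp only [halfHankelIntegral, intervalIntegral.integral_const_mul, integral_const_mul]
  ring

theorem halfHankelIntegral_finsetSum {ι : Type*} {f : ι → ℂ → ℂ} (s : Finset ι)
    (hf : ∀ i ∈ s, HalfHankelIntegrable c (f i)) :
    halfHankelIntegral c (fun w => ∑ i ∈ s, f i w) = ∑ i ∈ s, halfHankelIntegral c (f i) := by
  simp only [halfHankelIntegral]
  rw [intervalIntegral.integral_finsetSum fun i hi => (hf i hi).left,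
    integral_finsetSum s fun i hi => (hf i hi).top, Finset.mul_sum, Finset.sum_add_distrib]

theorem tendsto_halfHankelIntegral_of_dominated {ι : Type*} {l : Filter ι}
    [l.IsCountablyGenerated] {f : ι → ℂ → ℂ} {g : ℂ → ℂ} {bound : ℂ → ℝ}
    (hbound : HalfHankelIntegrable c bound)
    (hf : ∀ᶠ i in l, ContinuousOn (f i) (halfStrip c))
    (hle : ∀ᶠ i in l, ∀ w ∈ halfStrip c, ‖f i w‖ ≤ bound w)
    (hlim : ∀ w ∈ halfStrip c, Tendsto (fun i => f i w) l (𝓝 (g w))) :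
    Tendsto (fun i => halfHankelIntegral c (f i)) l (𝓝 (halfHankelIntegral c g)) := by
  have hint : ∀ᶠ i in l, HalfHankelIntegrable c (f i) := by
    filter_upwards [hf, hle] with i hi hi' using hbound.of_norm_le hi hi'
  have mem_left {θ : ℝ} (hθ : θ ∈ uIoc 0 π) : (c + θ * I : ℂ) ∈ halfStrip c :=
    left_mem_halfStrip (Ioc_subset_Icc_self (uIoc_of_le Real.pi_pos.le ▸ hθ))
  refine Tendsto.add (Tendsto.const_mul _ ?_) ?_
  · refine intervalIntegral.tendsto_integral_filter_of_dominated_convergence _ ?_ ?_ hbound.left ?_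
    · filter_upwards [hint] with i hi using hi.left.def'.aestronglyMeasurable
    · filter_upwards [hle] with i hi using .of_forall fun θ hθ => hi _ (mem_left hθ)
    · exact .of_forall fun θ hθ => hlim _ (mem_left hθ)
  · refine tendsto_integral_filter_of_dominated_convergence _ ?_ ?_ hbound.top ?_
    · filter_upwards [hint] with i hi using hi.top.aestronglyMeasurable
    · filter_upwards [hle] with i hi
      filter_upwards [ae_restrict_mem measurableSet_Ioi] with t ht
      exact hi _ (top_mem_halfStrip (le_of_lt ht))
    · filter_upwards [ae_restrict_mem measurableSet_Ioi] with t ht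
      exact hlim _ (top_mem_halfStrip (le_of_lt ht))

theorem hasSum_halfHankelIntegral {ι : Type*} [Countable ι] {f : ι → ℂ → ℂ} {F g : ℂ → ℂ}
    {u : ι → ℝ} (hg : HalfHankelIntegrable c g) (hu : Summable u) (hu0 : ∀ i, 0 ≤ u i)
    (hf : ∀ i, ContinuousOn (f i) (halfStrip c))
    (hle : ∀ i, ∀ w ∈ halfStrip c, ‖f i w‖ ≤ u i * ‖g w‖)
    (hF : ∀ w ∈ halfStrip c, HasSum (fun i => f i w) (F w)) :
    HasSum (fun i => halfHankelIntegral c (f i)) (halfHankelIntegral c F) := by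
  have hint (i : ι) : HalfHankelIntegrable c (f i) :=
    (hg.norm.const_mul (u i)).of_norm_le (hf i) (hle i)
  simp only [HasSum, ← halfHankelIntegral_finsetSum _ fun i _ => hint i]
  refine tendsto_halfHankelIntegral_of_dominated (hg.norm.const_mul (∑' i, u i)) ?_ ?_ hF
  · exact .of_forall fun s => continuousOn_finsetSum s fun i _ => hf i
  · refine .of_forall fun s w hw => ?_
    calc ‖∑ i ∈ s, f i w‖ ≤ ∑ i ∈ s, u i * ‖g w‖ := norm_sum_le_of_le s fun i _ => hle i w hw
      _ = (∑ i ∈ s, u i) * ‖g w‖ := (Finset.sum_mul ..).symm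
      _ ≤ (∑' i, u i) * ‖g w‖ := by gcongr; exact hu.sum_le_tsum s fun i _ => hu0 i

theorem halfHankelIntegral_eq_integral_add (hcd : c ≤ d) {f : ℂ → ℂ}
    (hf : DifferentiableOn ℂ f (halfStrip c)) (hint : HalfHankelIntegrable c f) :
    halfHankelIntegral c f = (∫ t in c..d, f t) + halfHankelIntegral d f := by
  have hsub : uIcc c d ×ℂ uIcc 0 π ⊆ halfStrip c := by
    rw [uIcc_of_le hcd, uIcc_of_le Real.pi_pos.le]
    exact inter_subset_inter_left _ (preimage_mono Icc_subset_Ici_self)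
  have hrect := integral_boundary_rect_eq_zero_of_differentiableOn f c (d + π * I)
    (hf.mono (by simpa using hsub))
  simp only [add_re, ofReal_re, mul_re, I_re, mul_zero, ofReal_im, I_im, mul_one, sub_self,
    add_zero, ofReal_zero, zero_mul, add_im, mul_im, zero_add, smul_eq_mul] at hrect
  rw [halfHankelIntegral, halfHankelIntegral, ← intervalIntegral.integral_interval_add_Ioi hint.top
    (hint.top.mono_set (Ioi_subset_Ioi hcd))]
  linear_combination -hrect

theorem im_halfHankelIntegral_eq_of_le (hcd : c ≤ d) {f : ℂ → ℂ}
    (hf : DifferentiableOn ℂ f (halfStrip c)) (hint : HalfHankelIntegrable c f)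
    (hreal : ∀ t : ℝ, (f t).im = 0) :
    (halfHankelIntegral c f).im = (halfHankelIntegral d f).im := by
  have hf_re (t : ℝ) : f t = ((f t).re : ℂ) := Complex.ext rfl (by simp [hreal])
  have him : (∫ t in c..d, f t).im = 0 := by
    rw [funext hf_re, intervalIntegral.integral_ofReal, ofReal_im]
  rw [halfHankelIntegral_eq_integral_add hcd hf hint, add_im, him, zero_add]

theorem halfHankelIntegral_eq_neg_of_hasDerivAt {F f : ℂ → ℂ}
    (hF : ∀ w ∈ halfStrip c, HasDerivAt F (f w) w) (hf : HalfHankelIntegrable c f)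
    (hlim : Tendsto (fun t : ℝ => F (t + π * I)) atTop (𝓝 0)) :
    halfHankelIntegral c f = -F c := by
  have hleft : I * ∫ θ in (0 : ℝ)..π, f (c + θ * I) = F (c + π * I) - F c := by
    rw [← intervalIntegral.integral_const_mul, intervalIntegral.integral_eq_sub_of_hasDerivAt
      (f := fun θ : ℝ => F (c + θ * I)) (fun θ hθ => ?_) (hf.left.const_mul I)]
    · simp
    · have hline : HasDerivAt (fun θ : ℝ => (c + θ * I : ℂ)) I θ := by
        simpa using (((hasDerivAt_id (θ : ℂ)).mul_const I).const_add (c : ℂ)).comp_ofReal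
      rw [uIcc_of_le Real.pi_pos.le] at hθ
      exact ((hF _ (left_mem_halfStrip hθ)).comp θ hline).congr_deriv (mul_comm _ _)
  have htop : ∫ t in Ioi c, f (t + π * I) = 0 - F (c + π * I) := by
    refine integral_Ioi_of_hasDerivAt_of_tendsto' (f := fun t : ℝ => F (t + π * I))
      (fun t ht => ?_) hf.top hlim
    have hline : HasDerivAt (fun t : ℝ => (t + π * I : ℂ)) 1 t := by
      simpa using ((hasDerivAt_id (t : ℂ)).add_const (π * I)).comp_ofReal
    exact ((hF _ (top_mem_halfStrip ht)).comp t hline).congr_deriv (mul_one _)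
  rw [halfHankelIntegral, hleft, htop]
  ring

end HalfHankelContour

section HankelFormula

/-- The integrand `eˢ s⁻ᶻ ds` of Hankel's formula for `1 / Γ(z)`, in the coordinate `s = eʷ`. -/
noncomputable def hankelKernel (z : ℝ) (w : ℂ) : ℂ := exp (exp w + w * (1 - z))

theorem differentiable_hankelKernel (z : ℝ) : Differentiable ℂ (hankelKernel z) := by
  unfold hankelKernel
  fun_prop

theorem hankelKernel_add (z s : ℝ) (w : ℂ) :
    hankelKernel (z + s) w = hankelKernel z w * exp (-(s * w)) := by
  rw [hankelKernel, hankelKernel, ← Complex.exp_add]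
  congr 1
  push_cast
  ring

theorem hankelKernel_ofReal (z t : ℝ) :
    hankelKernel z t = (Real.exp (Real.exp t + t * (1 - z)) : ℝ) := by
  simp [hankelKernel]

theorem hankelKernel_top (z t : ℝ) :
    hankelKernel z (t + π * I) =
      (Real.exp (-Real.exp t + t * (1 - z)) : ℝ) * exp ((π * (1 - z) : ℝ) * I) := by
  rw [hankelKernel, Complex.exp_add t, exp_pi_mul_I]
  push_cast
  rw [← Complex.exp_add]
  congr 1
  ring

theorem norm_hankelKernel (z : ℝ) (w : ℂ) :
    ‖hankelKernel z w‖ = Real.exp ((exp w).re + w.re * (1 - z)) := by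
  simp [hankelKernel, norm_exp]

theorem norm_hankelKernel_top (z t : ℝ) :
    ‖hankelKernel z (t + π * I)‖ = Real.exp (-Real.exp t + t * (1 - z)) := by
  rw [hankelKernel_top, norm_mul, norm_exp_ofReal_mul_I, mul_one, norm_real,
    Real.norm_of_nonneg (Real.exp_pos _).le]

theorem norm_hankelKernel_le_of_re_nonneg {z z' : ℝ} (hz : z' ≤ z) {w : ℂ} (hw : 0 ≤ w.re) :
    ‖hankelKernel z w‖ ≤ ‖hankelKernel z' w‖ := by
  simp only [norm_hankelKernel]
  gcongr

theorem norm_hankelKernel_left_le (z : ℝ) {c : ℝ} (hc : c ≤ 0) (θ : ℝ) :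
    ‖hankelKernel z (c + θ * I)‖ ≤ Real.exp (1 + c * (1 - z)) := by
  have hre : (exp (c + θ * I)).re ≤ 1 :=
    (re_le_norm _).trans (by simpa [norm_exp] using hc)
  have hre_left : (c + θ * I : ℂ).re = c := by simp
  rw [norm_hankelKernel, hre_left]
  gcongr

theorem exp_neg_exp_add_isBigO (k : ℝ) :
    (fun t : ℝ => Real.exp (-Real.exp t + t * k)) =O[atTop] fun t => Real.exp (-1 * t) := by
  refine .of_bound 1 ?_
  filter_upwards [eventually_ge_atTop (2 * (k + 1)), eventually_ge_atTop 0] with t ht ht0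
  have hquad := Real.quadratic_le_exp_of_nonneg ht0
  rw [Real.norm_of_nonneg (Real.exp_pos _).le, Real.norm_of_nonneg (Real.exp_pos _).le, one_mul,
    Real.exp_le_exp]
  nlinarith

theorem tendsto_hankelKernel_top (z : ℝ) :
    Tendsto (fun t : ℝ => hankelKernel z (t + π * I)) atTop (𝓝 0) := by
  rw [tendsto_zero_iff_norm_tendsto_zero]
  simp_rw [norm_hankelKernel_top]
  exact (exp_neg_exp_add_isBigO _).trans_tendsto
    (by simpa using Real.tendsto_exp_neg_atTop_nhds_zero)

theorem halfHankelIntegrable_hankelKernel (z c : ℝ) :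
    HalfHankelIntegrable c (hankelKernel z) where
  left := ((differentiable_hankelKernel z).continuous.comp (by fun_prop)).intervalIntegrable ..
  top := by
    simp_rw [hankelKernel_top]
    exact (integrable_of_isBigO_exp_neg one_pos (by fun_prop)
      (exp_neg_exp_add_isBigO (1 - z))).ofReal.mul_const _

theorem im_halfHankelIntegral_hankelKernel_eq (z c d : ℝ) :
    (halfHankelIntegral c (hankelKernel z)).im = (halfHankelIntegral d (hankelKernel z)).im := by
  wlog hcd : c ≤ d generalizing c d
  · exact (this d c (le_of_not_ge hcd)).symm
  exact im_halfHankelIntegral_eq_of_le hcd (differentiable_hankelKernel z).differentiableOn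
    (halfHankelIntegrable_hankelKernel z c) fun t => by rw [hankelKernel_ofReal, ofReal_im]

theorem tendsto_integral_exp_neg_exp_add {s : ℝ} (hs : 0 < s) :
    Tendsto (fun c => ∫ t in Ioi c, Real.exp (-Real.exp t + t * s)) atBot (𝓝 (Real.Gamma s)) := by
  have hsubst (c : ℝ) : ∫ t in Ioi c, Real.exp (-Real.exp t + t * s) =
      ∫ y in Ioi (Real.exp c), Real.exp (-y) * y ^ (s - 1) := by
    rw [← integral_comp_exp_Ioi]
    congr 1 with t
    rw [← Real.exp_mul, smul_eq_mul, ← Real.exp_add, ← Real.exp_add]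
    ring_nf
  have hcover := (aecover_Ioi_of_Ioi (μ := volume) (A := (0 : ℝ))
    Real.tendsto_exp_atBot).integral_tendsto_of_countably_generated
      (Real.GammaIntegral_convergent hs)
  simp_rw [hsubst]
  rw [Real.Gamma_eq_integral hs]
  refine hcover.congr fun c => ?_
  rw [Measure.restrict_restrict_of_subset (Ioi_subset_Ioi (Real.exp_pos c).le)]

theorem tendsto_halfHankelIntegral_hankelKernel {z : ℝ} (hz : z < 1) :
    Tendsto (fun c => halfHankelIntegral c (hankelKernel z)) atBot
      (𝓝 (Real.Gamma (1 - z) * exp ((π * (1 - z) : ℝ) * I))) := by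
  have hs : 0 < 1 - z := by linarith
  have hleft : Tendsto (fun c : ℝ => ∫ θ in (0 : ℝ)..π, hankelKernel z (c + θ * I)) atBot
      (𝓝 0) := by
    refine squeeze_zero_norm' (a := fun c => Real.exp (1 + c * (1 - z)) * |π - 0|) ?_ ?_
    · filter_upwards [eventually_le_atBot 0] with c hc
      exact intervalIntegral.norm_integral_le_of_norm_le_const fun θ _ =>
        norm_hankelKernel_left_le z hc θ
    · have hexp : Tendsto (fun c : ℝ => 1 + c * (1 - z)) atBot atBot :=
        tendsto_atBot_add_const_left _ _ (tendsto_id.atBot_mul_const hs)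
      simpa using (Real.tendsto_exp_atBot.comp hexp).mul_const |π - 0|
  have htop : Tendsto (fun c : ℝ => ∫ t in Ioi c, hankelKernel z (t + π * I)) atBot
      (𝓝 (Real.Gamma (1 - z) * exp ((π * (1 - z) : ℝ) * I))) := by
    simp_rw [hankelKernel_top, integral_mul_const, integral_complex_ofReal]
    exact ((continuous_ofReal.tendsto _).comp (tendsto_integral_exp_neg_exp_add hs)).mul_const _
  simpa [halfHankelIntegral] using (hleft.const_mul I).add htop

theorem Gamma_one_sub_mul_sin_pi_mul {z : ℝ} (hz : z < 1) :
    Real.Gamma (1 - z) * Real.sin (π * z) = π / Real.Gamma z := by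
  have hrefl := Real.Gamma_mul_Gamma_one_sub z
  have hpos : Real.Gamma (1 - z) ≠ 0 := (Real.Gamma_pos_of_pos (by linarith)).ne'
  by_cases hsin : Real.sin (π * z) = 0
  · have hΓ : Real.Gamma z = 0 := by simpa [hsin, hpos] using hrefl
    simp [hsin, hΓ]
  · have hΓ : Real.Gamma z ≠ 0 := left_ne_zero_of_mul (hrefl ▸ div_ne_zero Real.pi_ne_zero hsin)
    rw [eq_div_iff hΓ]
    linear_combination (eq_div_iff hsin).mp hrefl

theorem im_halfHankelIntegral_hankelKernel_of_lt_one {z : ℝ} (hz : z < 1) (c : ℝ) :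
    (halfHankelIntegral c (hankelKernel z)).im = π / Real.Gamma z := by
  have hlim := (continuous_im.tendsto _).comp (tendsto_halfHankelIntegral_hankelKernel hz)
  rw [im_ofReal_mul, exp_ofReal_mul_I_im, mul_sub, mul_one, Real.sin_pi_sub,
    Gamma_one_sub_mul_sin_pi_mul hz] at hlim
  refine tendsto_nhds_unique (tendsto_const_nhds.congr fun d => ?_) hlim
  exact im_halfHankelIntegral_hankelKernel_eq z c d

theorem tendsto_halfHankelIntegral_zero_hankelKernel (z : ℝ) :
    Tendsto (fun z' => halfHankelIntegral 0 (hankelKernel z')) (𝓝 z)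
      (𝓝 (halfHankelIntegral 0 (hankelKernel z))) := by
  refine tendsto_halfHankelIntegral_of_dominated
    (halfHankelIntegrable_hankelKernel (z - 1) 0).norm ?_ ?_ ?_
  · exact .of_forall fun z' => (differentiable_hankelKernel z').continuous.continuousOn
  · filter_upwards [lt_mem_nhds (sub_one_lt z)] with z' hz' w hw
    exact norm_hankelKernel_le_of_re_nonneg hz'.le hw.1
  · intro w _
    have : Continuous fun z' : ℝ => hankelKernel z' w := by unfold hankelKernel; fun_prop
    exact this.tendsto z

-- The recursion `1 / Γ(z) = z / Γ(z + 1)` degenerates at `z = 0`, so the value at `1` has to come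
-- from continuity in `z`.
theorem im_halfHankelIntegral_hankelKernel_one (c : ℝ) :
    (halfHankelIntegral c (hankelKernel 1)).im = π := by
  have hint := (continuous_im.tendsto _).comp (tendsto_halfHankelIntegral_zero_hankelKernel 1)
  have hΓ : Tendsto (fun z => π / Real.Gamma z) (𝓝 1) (𝓝 π) := by
    have hcont : ContinuousAt Real.Gamma 1 :=
      (Real.differentiableAt_Gamma fun m => by linarith [m.cast_nonneg (α := ℝ)]).continuousAt
    simpa [div_eq_mul_inv] using (hcont.tendsto.inv₀ (by simp)).const_mul π
  rw [im_halfHankelIntegral_hankelKernel_eq 1 c 0]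
  refine tendsto_nhds_unique (l := 𝓝[<] (1 : ℝ)) (hint.mono_left nhdsWithin_le_nhds)
    ((hΓ.mono_left nhdsWithin_le_nhds).congr' ?_)
  filter_upwards [self_mem_nhdsWithin] with z hz
  exact (im_halfHankelIntegral_hankelKernel_of_lt_one hz 0).symm

theorem hasDerivAt_hankelKernel_add_one (z : ℝ) (w : ℂ) :
    HasDerivAt (hankelKernel (z + 1)) (hankelKernel z w - z * hankelKernel (z + 1) w) w := by
  have hderiv := ((Complex.hasDerivAt_exp w).add
    ((hasDerivAt_id w).mul_const (1 - ((z + 1 : ℝ) : ℂ)))).cexp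
  refine hderiv.congr_deriv ?_
  have hstep : hankelKernel z w = hankelKernel (z + 1) w * exp w := by
    rw [hankelKernel_add, mul_assoc, ← Complex.exp_add]
    simp
  rw [hstep, hankelKernel]
  simp only [Pi.add_apply, id]
  push_cast
  ring

theorem im_halfHankelIntegral_hankelKernel_eq_mul (z c : ℝ) :
    (halfHankelIntegral c (hankelKernel z)).im =
      z * (halfHankelIntegral c (hankelKernel (z + 1))).im := by
  have hz := halfHankelIntegrable_hankelKernel z c
  have hz1 := (halfHankelIntegrable_hankelKernel (z + 1) c).const_mul (z : ℂ)
  have hderiv := halfHankelIntegral_eq_neg_of_hasDerivAt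
    (fun w _ => hasDerivAt_hankelKernel_add_one z w) (hz.sub hz1) (tendsto_hankelKernel_top (z + 1))
  rw [halfHankelIntegral_sub hz hz1, halfHankelIntegral_const_mul, hankelKernel_ofReal] at hderiv
  have him := congrArg im hderiv
  rw [sub_im, im_ofReal_mul, neg_im, ofReal_im, neg_zero] at him
  linarith

theorem im_halfHankelIntegral_hankelKernel (z c : ℝ) :
    (halfHankelIntegral c (hankelKernel z)).im = π / Real.Gamma z := by
  obtain ⟨n, hn⟩ := exists_nat_gt (z - 1)
  induction n generalizing z with
  | zero => exact im_halfHankelIntegral_hankelKernel_of_lt_one (by simpa using hn) c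
  | succ n ih =>
    obtain rfl | hz := eq_or_ne z 1
    · simp [im_halfHankelIntegral_hankelKernel_one]
    · have hne : z - 1 ≠ 0 := sub_ne_zero.mpr hz
      have hrec := im_halfHankelIntegral_hankelKernel_eq_mul (z - 1) c
      have hΓ := Real.Gamma_add_one hne
      rw [ih (z - 1) (by push_cast at hn; linarith), sub_add_cancel] at hrec
      rw [sub_add_cancel] at hΓ
      rw [hΓ, div_mul_eq_div_div_swap, hrec, mul_div_cancel_left₀ _ hne]

end HankelFormula

section MittagLeffler

theorem add_mul_cos_le_norm_exp_add (ζ : ℂ) (x : ℝ) :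
    (Real.exp ζ.re + x) * Real.cos (ζ.im / 2) ≤ ‖exp ζ + x‖ := by
  -- Rotating by `-Im ζ / 2` gives `exp ζ` and `x` the arguments `± Im ζ / 2`.
  set u : ℂ := exp ((-(ζ.im / 2) : ℝ) * I)
  have hre : (u * (exp ζ + x)).re = (Real.exp ζ.re + x) * Real.cos (ζ.im / 2) := by
    have hsum : ((-(ζ.im / 2) : ℝ) * I + ζ : ℂ).im = ζ.im / 2 := by
      simp only [add_im, im_ofReal_mul, I_im]
      ring
    rw [mul_add, ← Complex.exp_add, add_re, exp_re, hsum, re_mul_ofReal, exp_ofReal_mul_I_re,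
      Real.cos_neg, add_re, re_ofReal_mul, I_re]
    ring_nf
  calc (Real.exp ζ.re + x) * Real.cos (ζ.im / 2) = (u * (exp ζ + x)).re := hre.symm
    _ ≤ ‖u * (exp ζ + x)‖ := re_le_norm _
    _ = ‖exp ζ + x‖ := by rw [norm_mul, norm_exp_ofReal_mul_I, one_mul]

/-- The integrand of Hankel's formula for `E_{a,β}(-x)`: summing `(-x)ⁿ eˢ s^{-(an+β)} ds` over `n`
gives `eˢ s^{a-β} / (sᵃ + x) ds`, written in the coordinate `s = eʷ`. -/
noncomputable def mittagLefflerKernel (a β x : ℝ) (w : ℂ) : ℂ :=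
  hankelKernel β w * (exp (a * w) / (exp (a * w) + x))

variable {a x c : ℝ} (β : ℝ)

theorem mittagLefflerKernel_ofReal_im (a β x t : ℝ) : (mittagLefflerKernel a β x t).im = 0 := by
  have hofReal : mittagLefflerKernel a β x t = ((Real.exp (Real.exp t + t * (1 - β)) *
      (Real.exp (a * t) / (Real.exp (a * t) + x)) : ℝ) : ℂ) := by
    rw [mittagLefflerKernel, hankelKernel_ofReal]
    push_cast
    rfl
  rw [hofReal, ofReal_im]

theorem hasSum_mittagLefflerKernel {w : ℂ} (hw : |x| < Real.exp (a * w.re)) :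
    HasSum (fun n : ℕ => ((-x) ^ n : ℝ) * hankelKernel (β + a * n) w)
      (mittagLefflerKernel a β x w) := by
  have hexp : exp (a * w) ≠ 0 := Complex.exp_ne_zero _
  have hratio : ‖-x / exp (a * w)‖ < 1 := by
    rw [norm_div, norm_neg, norm_real, norm_exp, re_ofReal_mul, div_lt_one (Real.exp_pos _)]
    exact hw
  have hterm (n : ℕ) : ((-x) ^ n : ℝ) * hankelKernel (β + a * n) w =
      hankelKernel β w * (-x / exp (a * w)) ^ n := by
    rw [hankelKernel_add, div_pow, ← Complex.exp_nat_mul, div_eq_mul_inv, ← Complex.exp_neg]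
    push_cast
    ring_nf
  have hsum : exp (a * w) / (exp (a * w) + x) = (1 - -x / exp (a * w))⁻¹ := by
    rw [← inv_div, add_div, div_self hexp, neg_div, sub_neg_eq_add]
  simp_rw [hterm, mittagLefflerKernel, hsum]
  exact (hasSum_geometric_of_norm_lt_one hratio).mul_left _

theorem hasSum_halfHankelIntegral_hankelKernel (ha : 0 ≤ a) (hx : |x| < Real.exp (a * c)) :
    HasSum (fun n : ℕ => ((-x) ^ n : ℝ) * halfHankelIntegral c (hankelKernel (β + a * n)))
      (halfHankelIntegral c (mittagLefflerKernel a β x)) := by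
  set q : ℝ := |x| * Real.exp (-(a * c)) with hq
  have hq0 : 0 ≤ q := by positivity
  have hq1 : q < 1 := by rwa [hq, Real.exp_neg, ← div_eq_mul_inv, div_lt_one (Real.exp_pos _)]
  simp_rw [← halfHankelIntegral_const_mul]
  refine hasSum_halfHankelIntegral (halfHankelIntegrable_hankelKernel β c)
    (summable_geometric_of_lt_one hq0 hq1) (fun n => by positivity) (fun n => ?_)
    (fun n w hw => ?_) fun w hw => hasSum_mittagLefflerKernel β (hx.trans_le ?_)
  · exact continuousOn_const.mul (differentiable_hankelKernel _).continuous.continuousOn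
  · have hre : c ≤ w.re := hw.1
    have hexp : ‖exp (-((a * n : ℝ) * w))‖ ≤ Real.exp (-(a * c)) ^ n := by
      rw [norm_exp, neg_re, re_ofReal_mul, ← Real.exp_nat_mul, Real.exp_le_exp]
      nlinarith [mul_nonneg (mul_nonneg ha n.cast_nonneg) (sub_nonneg.mpr hre)]
    rw [hankelKernel_add, norm_mul, norm_mul, norm_real, norm_pow, norm_neg, Real.norm_eq_abs,
      hq, mul_pow, mul_left_comm, mul_comm]
    gcongr
  · have hre : c ≤ w.re := hw.1
    gcongr

theorem cos_mul_pi_div_two_pos (ha : a ∈ Ioo 0 1) : 0 < Real.cos (a * π / 2) := by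
  have hπ := Real.pi_pos
  refine Real.cos_pos_of_mem_Ioo ⟨?_, ?_⟩ <;> nlinarith [ha.1, ha.2]

theorem add_mul_cos_le_norm_exp_mul_add (ha : a ∈ Ioo 0 1) (hx : 0 ≤ x) {w : ℂ}
    (hw : w ∈ halfStrip c) :
    (Real.exp (a * w.re) + x) * Real.cos (a * π / 2) ≤ ‖exp (a * w) + x‖ := by
  obtain ⟨-, him0, himπ⟩ := hw
  have hcos : Real.cos (a * π / 2) ≤ Real.cos (a * w.im / 2) := by
    refine Real.cos_le_cos_of_nonneg_of_le_pi ?_ ?_ ?_ <;> nlinarith [ha.1, ha.2, Real.pi_pos]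
  calc (Real.exp (a * w.re) + x) * Real.cos (a * π / 2)
      ≤ (Real.exp (a * w.re) + x) * Real.cos (a * w.im / 2) := by gcongr
    _ ≤ ‖exp (a * w) + x‖ := by simpa using add_mul_cos_le_norm_exp_add (a * w) x

theorem exp_mul_add_ne_zero (ha : a ∈ Ioo 0 1) (hx : 0 ≤ x) {w : ℂ} (hw : w ∈ halfStrip c) :
    exp (a * w) + x ≠ 0 := by
  have hcos := cos_mul_pi_div_two_pos ha
  refine norm_pos_iff.mp (lt_of_lt_of_le ?_ (add_mul_cos_le_norm_exp_mul_add ha hx hw))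
  positivity

theorem differentiableOn_mittagLefflerKernel (ha : a ∈ Ioo 0 1) (hx : 0 ≤ x) :
    DifferentiableOn ℂ (mittagLefflerKernel a β x) (halfStrip c) :=
  (differentiable_hankelKernel β).differentiableOn.mul <|
    DifferentiableOn.div (by fun_prop) (by fun_prop) fun _ hw => exp_mul_add_ne_zero ha hx hw

theorem norm_mittagLefflerKernel_le (ha : a ∈ Ioo 0 1) (hx : 0 ≤ x) {w : ℂ}
    (hw : w ∈ halfStrip c) :
    ‖mittagLefflerKernel a β x w‖ ≤ (Real.cos (a * π / 2))⁻¹ * ‖hankelKernel β w‖ := by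
  have hcos := cos_mul_pi_div_two_pos ha
  have hpos : 0 < ‖exp (a * w) + x‖ := norm_pos_iff.mpr (exp_mul_add_ne_zero ha hx hw)
  rw [mittagLefflerKernel, norm_mul, mul_comm]
  gcongr
  rw [norm_div, norm_exp, re_ofReal_mul, div_le_iff₀ hpos, inv_mul_eq_div, le_div_iff₀ hcos]
  refine le_trans ?_ (add_mul_cos_le_norm_exp_mul_add ha hx hw)
  gcongr
  exact le_add_of_nonneg_right hx

theorem halfHankelIntegrable_mittagLefflerKernel (ha : a ∈ Ioo 0 1) (hx : 0 ≤ x) :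
    HalfHankelIntegrable c (mittagLefflerKernel a β x) :=
  ((halfHankelIntegrable_hankelKernel β c).norm.const_mul _).of_norm_le
    (differentiableOn_mittagLefflerKernel β ha hx).continuousOn
    fun _ hw => norm_mittagLefflerKernel_le β ha hx hw

theorem hasSum_mittagLefflerReal_neg (ha : a ∈ Ioo 0 1) (hx : 0 ≤ x) :
    HasSum (fun n : ℕ => (-x) ^ n / Real.Gamma (a * n + β))
      ((halfHankelIntegral 0 (mittagLefflerKernel a β x)).im / π) := by
  -- The series of kernels converges only for `x < |exp (a w)|`, so the contour is shifted right.
  obtain ⟨c, hc0, hc⟩ : ∃ c : ℝ, 0 ≤ c ∧ |x| < Real.exp (a * c) := by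
    refine ⟨x / a, div_nonneg hx ha.1.le, ?_⟩
    rw [mul_div_cancel₀ _ ha.1.ne', abs_of_nonneg hx]
    linarith [Real.add_one_le_exp x]
  rw [im_halfHankelIntegral_eq_of_le hc0 (differentiableOn_mittagLefflerKernel β ha hx)
    (halfHankelIntegrable_mittagLefflerKernel β ha hx) (mittagLefflerKernel_ofReal_im a β x)]
  have hsum := (imCLM.hasSum (hasSum_halfHankelIntegral_hankelKernel β ha.1.le hc)).div_const π
  refine hsum.congr_fun fun n => ?_
  rw [imCLM_apply, im_ofReal_mul, im_halfHankelIntegral_hankelKernel, add_comm β]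
  field_simp

theorem tendsto_mittagLefflerKernel_atTop (a β : ℝ) (w : ℂ) :
    Tendsto (fun x => mittagLefflerKernel a β x w) atTop (𝓝 0) := by
  have hdenom : Tendsto (fun x : ℝ => exp (a * w) + x) atTop (Bornology.cobounded ℂ) :=
    (tendsto_const_add_cobounded _).comp (RCLike.tendsto_ofReal_atTop_cobounded ℂ)
  simpa [mittagLefflerKernel, div_eq_mul_inv] using
    ((tendsto_inv₀_cobounded.comp hdenom).const_mul (exp (a * w))).const_mul (hankelKernel β w)

theorem tendsto_mittagLefflerReal_neg_atTop (ha : a ∈ Ioo 0 1) :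
    Tendsto (fun x => mittagLefflerReal a β (-x)) atTop (𝓝 0) := by
  have hint : Tendsto (fun x => halfHankelIntegral 0 (mittagLefflerKernel a β x)) atTop
      (𝓝 (halfHankelIntegral 0 fun _ => 0)) := by
    refine tendsto_halfHankelIntegral_of_dominated
      ((halfHankelIntegrable_hankelKernel β 0).norm.const_mul (Real.cos (a * π / 2))⁻¹) ?_ ?_
      fun w _ => tendsto_mittagLefflerKernel_atTop a β w
    · filter_upwards [eventually_ge_atTop 0] with x hx
      exact (differentiableOn_mittagLefflerKernel β ha hx).continuousOn
    · filter_upwards [eventually_ge_atTop 0] with x hx w hw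
      exact norm_mittagLefflerKernel_le β ha hx hw
  have him := ((continuous_im.tendsto _).comp hint).div_const π
  simp only [halfHankelIntegral, intervalIntegral.integral_zero, integral_zero, mul_zero, add_zero,
    zero_im, zero_div] at him
  refine him.congr' ?_
  filter_upwards [eventually_ge_atTop 0] with x hx
  exact (hasSum_mittagLefflerReal_neg β ha hx).tsum_eq.symm

theorem mittagLefflerReal_eq_add_mul {a β z : ℝ}
    (h : Summable fun n : ℕ => z ^ n / Real.Gamma (a * n + β)) :
    mittagLefflerReal a β z = 1 / Real.Gamma β + z * mittagLefflerReal a (β + a) z := by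
  rw [mittagLefflerReal, mittagLefflerReal, h.tsum_eq_zero_add, ← tsum_mul_left]
  congr 1
  · simp
  · congr 1 with n
    push_cast
    ring_nf

theorem tendsto_mul_mittagLefflerReal_neg_atTop (ha : a ∈ Ioo 0 1) :
    Tendsto (fun x => x * mittagLefflerReal a β (-x)) atTop (𝓝 (1 / Real.Gamma (β - a))) := by
  have hlim := (tendsto_mittagLefflerReal_neg_atTop (β - a) ha).const_sub (1 / Real.Gamma (β - a))
  rw [sub_zero] at hlim
  refine hlim.congr' ?_
  filter_upwards [eventually_ge_atTop 0] with x hx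
  rw [mittagLefflerReal_eq_add_mul (hasSum_mittagLefflerReal_neg (β - a) ha hx).summable,
    sub_add_cancel]
  ring

end MittagLeffler

theorem Gamma_neg_of_mem_Ioo_neg_one_zero {s : ℝ} (hs : s ∈ Ioo (-1) 0) : Real.Gamma s < 0 := by
  have hpos : 0 < Real.Gamma (s + 1) := Real.Gamma_pos_of_pos (by linarith [hs.1])
  rw [Real.Gamma_add_one hs.2.ne] at hpos
  exact neg_of_mul_pos_right hpos hs.2.le

theorem mittagLeffler_ratio_limit_general {a β γ : ℝ} (ha : a ∈ Ioo 0 1)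
    (hγ : Real.Gamma (γ - a) ≠ 0) :
    Tendsto (fun x => mittagLefflerReal a β (-x) / mittagLefflerReal a γ (-x)) atTop
      (𝓝 (Real.Gamma (γ - a) / Real.Gamma (β - a))) := by
  have hdiv := (tendsto_mul_mittagLefflerReal_neg_atTop β ha).div
    (tendsto_mul_mittagLefflerReal_neg_atTop γ ha) (one_div_ne_zero hγ)
  rw [div_div_div_eq, one_mul, mul_one] at hdiv
  refine hdiv.congr' ?_
  filter_upwards [eventually_ne_atTop 0] with x hx
  exact mul_div_mul_left _ _ hx

/-- For `α ∈ (0,1/2)`,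
`E_{2α,α}(−x)/E_{2α,1}(−x) → Γ(1−2α)/Γ(−α)` as `x → +∞`, and this limit is negative. -/
theorem mittagLeffler_ratio_limit (α : ℝ) (hα : α ∈ Set.Ioo (0 : ℝ) (1 / 2)) :
    Filter.Tendsto
        (fun x : ℝ =>
          mittagLefflerReal (2 * α) α (-x) / mittagLefflerReal (2 * α) 1 (-x))
        Filter.atTop (nhds (Real.Gamma (1 - 2 * α) / Real.Gamma (-α))) ∧
      Real.Gamma (1 - 2 * α) / Real.Gamma (-α) < 0 := by
  obtain ⟨hα0, hα2⟩ := hα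
  have hpos : 0 < Real.Gamma (1 - 2 * α) := Real.Gamma_pos_of_pos (by linarith)
  have hneg : Real.Gamma (-α) < 0 :=
    Gamma_neg_of_mem_Ioo_neg_one_zero ⟨by linarith, by linarith⟩
  refine ⟨?_, div_neg_of_pos_of_neg hpos hneg⟩
  rw [show -α = α - 2 * α by ring]
  exact mittagLeffler_ratio_limit_general ⟨by linarith, by linarith⟩ hpos.ne'
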